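/- arXiv:2306.05154 — 2 statements merged into one kernel-verified Lean document; each statement's English description precedes it below -/
import Mathlib

section
/- Let f₁, …, f_k be signomials on ℝⁿ_{>0}. Then the actual negative normal cone Σ(f₁, …, f_k) is a closed subset of ℝⁿ. -/
/-- A signomial on the positive orthant `ℝⁿ_{>0}`: a function
`x ↦ ∑_{μ ∈ supp} coeff μ * x ^ μ` with finite support and nonzero coefficients. -/
structure Signomial (n : ℕ) where
  supp : Finset (Fin n → ℝ)
  coeff : (Fin n → ℝ) → ℝ
  coeff_ne_zero : ∀ μ ∈ supp, coeff μ ≠ 0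
  coeff_eq_zero : ∀ μ ∉ supp, coeff μ = 0

namespace Signomial

variable {n : ℕ}

/-- The monomial `x^μ = ∏ i, x i ^ μ i` (real exponents). -/
noncomputable def mono (x μ : Fin n → ℝ) : ℝ := ∏ i, x i ^ μ i

/-- Evaluation of a signomial. -/
noncomputable def eval (f : Signomial n) (x : Fin n → ℝ) : ℝ :=
  ∑ μ ∈ f.supp, f.coeff μ * mono x μ

open Classical in
/-- Evaluation of the restriction `f_{|S}` of `f` to a set `S ⊆ ℝⁿ`. -/
noncomputable def evalOn (f : Signomial n) (S : Set (Fin n → ℝ)) (x : Fin n → ℝ) : ℝ :=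
  ∑ μ ∈ f.supp, if μ ∈ S then f.coeff μ * mono x μ else 0

/-- The Newton polytope `N(f) = conv(σ(f))`. -/
def newton (f : Signomial n) : Set (Fin n → ℝ) :=
  convexHull ℝ (f.supp : Set (Fin n → ℝ))

/-- Euclidean scalar product on `Fin n → ℝ`. -/
noncomputable def dot (v μ : Fin n → ℝ) : ℝ := ∑ i, v i * μ i

/-- The face `N(f)_v` of the Newton polytope cut out by `v`. -/
def faceAt (f : Signomial n) (v : Fin n → ℝ) : Set (Fin n → ℝ) :=
  {μ ∈ f.newton | ∀ ν ∈ f.newton, dot v ν ≤ dot v μ}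

/-- `F` is a (nonempty, exposed) face of the Newton polytope of `f`. -/
def IsFace (f : Signomial n) (F : Set (Fin n → ℝ)) : Prop :=
  F.Nonempty ∧ ∃ v, F = f.faceAt v

/-- The (outer) normal cone of a face `F` of `N(f)`. -/
def normalCone (f : Signomial n) (F : Set (Fin n → ℝ)) : Set (Fin n → ℝ) :=
  {v | F ⊆ f.faceAt v}

/-- The negative normal cone `N_f^- = {v | N(f)_v ∩ σ₋(f) ≠ ∅}`. -/
def negCone (f : Signomial n) : Set (Fin n → ℝ) :=
  {v | ∃ μ ∈ f.supp, f.coeff μ < 0 ∧ μ ∈ f.faceAt v}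

/-- The positive orthant `ℝⁿ_{>0}`. -/
def posOrth (n : ℕ) : Set (Fin n → ℝ) := {x | ∀ i, 0 < x i}

/-- `S(f) = f⁻¹(ℝ_{<0})` (inside the positive orthant). -/
def negSet₁ (f : Signomial n) : Set (Fin n → ℝ) :=
  {x ∈ posOrth n | f.eval x < 0}

/-- `S(f₁, …, f_k) = ⋂ᵢ fᵢ⁻¹(ℝ_{<0})` (inside the positive orthant). -/
def negSet {k : ℕ} (f : Fin k → Signomial n) : Set (Fin n → ℝ) :=
  {x ∈ posOrth n | ∀ i, (f i).eval x < 0}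

/-- The actual negative normal cone `Σ(f)` of a single signomial. -/
def actualNegCone₁ (f : Signomial n) : Set (Fin n → ℝ) :=
  {v | ∃ x ∈ posOrth n, f.evalOn (f.faceAt v) x < 0}

/-- The actual negative normal cone `Σ(f₁, …, f_k)`. -/
def actualNegCone {k : ℕ} (f : Fin k → Signomial n) : Set (Fin n → ℝ) :=
  {v | ∃ x ∈ posOrth n, ∀ i, (f i).evalOn ((f i).faceAt v) x < 0}

/-- The real tropicalization (logarithmic limit set) of `S ⊆ ℝⁿ_{>0}`:
`w ∈ Trop(S)` iff there are sequences `x(m) ∈ S`, `t(m) ∈ (1,∞)` with `t(m) → ∞` and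
`Log_{t(m)}(x(m)) → w`. -/
def trop (S : Set (Fin n → ℝ)) : Set (Fin n → ℝ) :=
  {w | ∃ (x : ℕ → Fin n → ℝ) (t : ℕ → ℝ),
    (∀ m, x m ∈ S) ∧ (∀ m, 1 < t m) ∧
    Filter.Tendsto t Filter.atTop Filter.atTop ∧
    Filter.Tendsto (fun m i => Real.log (x m i) / Real.log (t m))
      Filter.atTop (nhds w)}

open Classical in
/-- The support of the restriction `f_{|F}`, i.e. `σ(f) ∩ F`. -/
noncomputable def restSupp (f : Signomial n) (F : Set (Fin n → ℝ)) : Finset (Fin n → ℝ) :=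
  f.supp.filter (fun μ => μ ∈ F)

/-- Evaluation of the signomial with coefficient vector `c ∈ ℝ^A`. -/
noncomputable def evalVec (A : Finset (Fin n → ℝ)) (c : A → ℝ) (x : Fin n → ℝ) : ℝ :=
  ∑ μ : A, c μ * mono x (μ : Fin n → ℝ)

/-- The nonnegativity cone `P⁺_A ⊆ ℝ^A`. -/
def nonnegConeSet (A : Finset (Fin n → ℝ)) : Set (A → ℝ) :=
  {c | ∀ x ∈ posOrth n, 0 ≤ evalVec A c x}

/-- The coefficient vector of `f` viewed in `ℝ^A`. -/
def coeffVec (f : Signomial n) (A : Finset (Fin n → ℝ)) : A → ℝ :=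
  fun μ => f.coeff μ

/-- The non-boundary condition (NB): for every face `F` of `N(f)`, if `f_{|F}` is
nonnegative on the positive orthant then it lies in the interior of the nonnegativity
cone `P⁺_{σ(f) ∩ F}`. -/
def NBcond (f : Signomial n) : Prop :=
  ∀ F : Set (Fin n → ℝ), f.IsFace F →
    coeffVec f (f.restSupp F) ∈ nonnegConeSet (f.restSupp F) →
    coeffVec f (f.restSupp F) ∈ interior (nonnegConeSet (f.restSupp F))

end Signomial

/-!
For `w` close to `v` the face `N(f)_w` is contained in `N(f)_v`, because a strict inequality
`v·μ < v·ν` between exponents persists under small perturbations of `v`. Hence `f_{|N(f)_w}` is the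
part of `f_{|N(f)_v}` of top weight with respect to `w`, and it dominates along every curve
`t ↦ x * exp (t * w)`: if `f_{|N(f)_w}` is negative at `x`, then `f_{|N(f)_v}` is negative far out
on the curve through `x`. The curve does not depend on `f`, so this works for finitely many
signomials at once.
-/

open Filter Topology

theorem eventually_isMaxOn_imp_isMaxOn {ι X α : Type*} [TopologicalSpace X] [LinearOrder α]
    [TopologicalSpace α] [OrderClosedTopology α] (s : Finset ι) {g : X → ι → α} {v : X}
    (hg : ∀ i ∈ s, ContinuousAt (g · i) v) :
    ∀ᶠ w in 𝓝 v, ∀ i ∈ s, IsMaxOn (g w) s i → IsMaxOn (g v) s i := by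
  have hlt : ∀ᶠ w in 𝓝 v, ∀ i ∈ s, ∀ j ∈ s, g v i < g v j → g w i < g w j := by
    simp only [eventually_all_finset, eventually_imp_distrib_left]
    exact fun i hi j hj h => (hg i hi).eventually_lt (hg j hj) h
  filter_upwards [hlt] with w hw i hi hmax
  exact isMaxOn_iff.2 fun j hj =>
    not_lt.1 fun h => (hw i hi j hj h).not_ge (isMaxOn_iff.1 hmax j hj)

theorem tendsto_exp_mul_atTop_ite {d : ℝ} (hd : d ≤ 0) :
    Tendsto (fun t => Real.exp (t * d)) atTop (𝓝 (if d = 0 then 1 else 0)) := by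
  rcases hd.eq_or_lt with rfl | hneg
  · simp
  · rw [if_neg hneg.ne]
    exact Real.tendsto_exp_atBot.comp (tendsto_id.atTop_mul_const_of_neg hneg)

theorem tendsto_sum_mul_exp_atTop {ι : Type*} (s : Finset ι) (a d : ι → ℝ) {M : ℝ}
    (hd : ∀ i ∈ s, d i ≤ M) :
    Tendsto (fun t => ∑ i ∈ s, a i * Real.exp (t * (d i - M))) atTop
      (𝓝 (∑ i ∈ s with d i = M, a i)) := by
  have hterm : ∀ i ∈ s, Tendsto (fun t => a i * Real.exp (t * (d i - M))) atTop
      (𝓝 (if d i = M then a i else 0)) := fun i hi => by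
    simpa [sub_eq_zero] using
      (tendsto_exp_mul_atTop_ite (sub_nonpos.2 (hd i hi))).const_mul (a i)
  simpa only [Finset.sum_filter] using tendsto_finsetSum s hterm

namespace Signomial

variable {n : ℕ} {f : Signomial n} {v w x μ μ₀ : Fin n → ℝ} {S : Set (Fin n → ℝ)}

theorem mem_restSupp : μ ∈ f.restSupp S ↔ μ ∈ f.supp ∧ μ ∈ S := by
  classical exact Finset.mem_filter

theorem evalOn_eq_sum_restSupp (f : Signomial n) (S : Set (Fin n → ℝ)) (x : Fin n → ℝ) :
    f.evalOn S x = ∑ μ ∈ f.restSupp S, f.coeff μ * mono x μ := by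
  classical exact (Finset.sum_filter _ _).symm

theorem supp_subset_newton (f : Signomial n) : (f.supp : Set (Fin n → ℝ)) ⊆ f.newton :=
  subset_convexHull ℝ _

theorem isLinearMap_dot (v : Fin n → ℝ) : IsLinearMap ℝ (dot v) :=
  ⟨dotProduct_add v, fun c => dotProduct_smul c v⟩

theorem continuous_dot_left (μ : Fin n → ℝ) : Continuous (dot · μ) :=
  continuous_id.dotProduct continuous_const

theorem mem_faceAt_iff_isMaxOn_supp (hμ : μ ∈ f.newton) :
    μ ∈ f.faceAt v ↔ IsMaxOn (dot v) f.supp μ :=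
  ⟨fun h => isMaxOn_iff.2 fun ν hν => h.2 ν (f.supp_subset_newton hν),
    fun h => ⟨hμ, convexHull_min h (convex_halfSpace_le (isLinearMap_dot v) _)⟩⟩

theorem mem_faceAt_iff_dot_eq (hμ : μ ∈ f.newton) (hμ₀ : μ₀ ∈ f.faceAt v) :
    μ ∈ f.faceAt v ↔ dot v μ = dot v μ₀ :=
  ⟨fun h => (hμ₀.2 μ hμ).antisymm (h.2 μ₀ hμ₀.1), fun h => ⟨hμ, h ▸ hμ₀.2⟩⟩

theorem eventually_restSupp_faceAt_subset (f : Signomial n) (v : Fin n → ℝ) :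
    ∀ᶠ w in 𝓝 v, f.restSupp (f.faceAt w) ⊆ f.restSupp (f.faceAt v) := by
  filter_upwards [eventually_isMaxOn_imp_isMaxOn f.supp
    fun μ _ => (continuous_dot_left μ).continuousAt (x := v)] with w hw μ hμ
  obtain ⟨hsupp, hface⟩ := mem_restSupp.1 hμ
  have hnewton := f.supp_subset_newton hsupp
  rw [mem_faceAt_iff_isMaxOn_supp hnewton] at hface
  exact mem_restSupp.2 ⟨hsupp, (mem_faceAt_iff_isMaxOn_supp hnewton).2 (hw μ hsupp hface)⟩

/-- The curve `t ↦ x * exp (t * w)` through `x` in direction `w`; in logarithmic coordinates it is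
the line `t ↦ log x + t w`, along which the monomial `x ^ μ` grows like `exp (t * (w·μ))`. -/
noncomputable def expCurve (x w : Fin n → ℝ) (t : ℝ) : Fin n → ℝ :=
  fun i => x i * Real.exp (t * w i)

theorem expCurve_mem_posOrth (hx : x ∈ posOrth n) (w : Fin n → ℝ) (t : ℝ) :
    expCurve x w t ∈ posOrth n :=
  fun i => mul_pos (hx i) (Real.exp_pos _)

theorem mono_expCurve (hx : x ∈ posOrth n) (w μ : Fin n → ℝ) (t : ℝ) :
    mono (expCurve x w t) μ = mono x μ * Real.exp (t * dot w μ) := by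
  simp only [mono, dot, expCurve, Finset.mul_sum, Real.exp_sum, ← Finset.prod_mul_distrib]
  refine Finset.prod_congr rfl fun i _ => ?_
  rw [Real.mul_rpow (hx i).le (Real.exp_pos _).le, ← Real.exp_mul, mul_assoc]

theorem tendsto_evalOn_expCurve (hx : x ∈ posOrth n) (hμ₀ : μ₀ ∈ f.faceAt w)
    (hS : f.restSupp (f.faceAt w) ⊆ f.restSupp S) :
    Tendsto (fun t => f.evalOn S (expCurve x w t) * Real.exp (-(t * dot w μ₀))) atTop
      (𝓝 (f.evalOn (f.faceAt w) x)) := by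
  have hnewton : ∀ μ ∈ f.restSupp S, μ ∈ f.newton := fun μ hμ =>
    f.supp_subset_newton (mem_restSupp.1 hμ).1
  have hscaled : ∀ t, f.evalOn S (expCurve x w t) * Real.exp (-(t * dot w μ₀)) =
      ∑ μ ∈ f.restSupp S, f.coeff μ * mono x μ * Real.exp (t * (dot w μ - dot w μ₀)) := fun t => by
    simp only [evalOn_eq_sum_restSupp, Finset.sum_mul, mono_expCurve hx, mul_assoc, ← Real.exp_add,
      sub_eq_add_neg, mul_neg, mul_add]
  have htop : f.restSupp (f.faceAt w) = {μ ∈ f.restSupp S | dot w μ = dot w μ₀} := by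
    ext μ
    rw [Finset.mem_filter]
    refine ⟨fun hμ => ⟨hS hμ, ?_⟩, fun ⟨hμ, hdot⟩ => mem_restSupp.2 ⟨(mem_restSupp.1 hμ).1, ?_⟩⟩
    · exact (mem_faceAt_iff_dot_eq (hnewton μ (hS hμ)) hμ₀).1 (mem_restSupp.1 hμ).2
    · exact (mem_faceAt_iff_dot_eq (hnewton μ hμ) hμ₀).2 hdot
  rw [evalOn_eq_sum_restSupp, htop]
  simp only [hscaled]
  exact tendsto_sum_mul_exp_atTop _ _ _ fun μ hμ => hμ₀.2 μ (hnewton μ hμ)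

theorem eventually_evalOn_expCurve_neg (hx : x ∈ posOrth n)
    (hS : f.restSupp (f.faceAt w) ⊆ f.restSupp S) (hneg : f.evalOn (f.faceAt w) x < 0) :
    ∀ᶠ t in atTop, f.evalOn S (expCurve x w t) < 0 := by
  obtain ⟨μ₀, hμ₀, -⟩ : ∃ μ ∈ f.restSupp (f.faceAt w), f.coeff μ * mono x μ ≠ 0 :=
    Finset.exists_ne_zero_of_sum_ne_zero (evalOn_eq_sum_restSupp f _ x ▸ hneg.ne)
  have hlim := tendsto_evalOn_expCurve hx (mem_restSupp.1 hμ₀).2 hS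
  filter_upwards [hlim.eventually_lt_const hneg] with t ht
  exact neg_of_mul_neg_left ht (Real.exp_pos _).le

end Signomial

open Signomial in
/-- The actual negative normal cone `Σ(f₁, …, f_k)` is closed. -/
theorem actualNegCone_isClosed {n k : ℕ} (f : Fin k → Signomial n) :
    IsClosed (actualNegCone f) := by
  refine isClosed_iff_frequently.2 fun v hv => ?_
  have hfaces : ∀ᶠ w in 𝓝 v, ∀ i,
      (f i).restSupp ((f i).faceAt w) ⊆ (f i).restSupp ((f i).faceAt v) :=
    eventually_all.2 fun i => (f i).eventually_restSupp_faceAt_subset v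
  obtain ⟨w, ⟨x, hx, hneg⟩, hsub⟩ := (hv.and_eventually hfaces).exists
  have hcurve : ∀ᶠ t in atTop, ∀ i, (f i).evalOn ((f i).faceAt v) (expCurve x w t) < 0 :=
    eventually_all.2 fun i => eventually_evalOn_expCurve_neg hx (hsub i) (hneg i)
  obtain ⟨t, ht⟩ := hcurve.exists
  exact ⟨expCurve x w t, expCurve_mem_posOrth hx w t, ht⟩
end

section
/- Let f₁, …, f_k be signomials on ℝⁿ_{>0} such that for every i = 1, …, k and every face F of N(f_i) the following non-boundary condition holds: if f_{i|F}(x) ≥ 0 for all x ∈ ℝⁿ_{>0}, then f_{i|F} lies in the interior of the nonnegativity cone P⁺_{σ(f_i)∩F}. Then Trop(S(f₁, …, f_k)) ⊆ ⋂_{i=1}^{k} Σ(f_i), where S(f₁, …, f_k) = ⋂_{i=1}^{k} f_i^{-1}(ℝ_{<0}). -/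
/-!
Along any sequence in the orthant whose logarithm has limiting direction `w`, the monomials of `f`
off the face `N(f)_w` are negligible against each monomial on that face. If the restriction of `f`
to the face were nonnegative, the non-boundary condition would put it in the interior of the
nonnegativity cone, so that it dominates a positive multiple of a monomial on the face; then `f`
itself would be positive far along the sequence. Hence the restriction takes a negative value as
soon as `f` is negative along the sequence.
-/

open Filter Topology in
theorem exists_pos_sub_smul_mem_of_mem_interior {E : Type*} [AddCommGroup E] [Module ℝ E]
    [TopologicalSpace E] [IsTopologicalAddGroup E] [ContinuousSMul ℝ E] {s : Set E} {c : E}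
    (hc : c ∈ interior s) (d : E) : ∃ ε > (0 : ℝ), c - ε • d ∈ s := by
  have hcont : Continuous fun ε : ℝ ↦ c - ε • d := by fun_prop
  have hlim : Tendsto (fun ε : ℝ ↦ c - ε • d) (𝓝[>] 0) (𝓝 c) := by
    simpa using (hcont.tendsto 0).mono_left nhdsWithin_le_nhds
  have hmem : ∀ᶠ ε : ℝ in 𝓝[>] 0, c - ε • d ∈ s :=
    hlim.eventually (mem_interior_iff_mem_nhds.mp hc)
  exact (eventually_mem_nhdsWithin.and hmem).exists

namespace Signomial

open Filter Asymptotics Topology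

variable {n : ℕ}

section Monomials

theorem dot_eq_dotProduct (v μ : Fin n → ℝ) : dot v μ = v ⬝ᵥ μ := rfl

theorem mono_eq_exp {x : Fin n → ℝ} (hx : x ∈ posOrth n) (μ : Fin n → ℝ) :
    mono x μ = Real.exp (dot (fun i ↦ Real.log (x i)) μ) := by
  simp only [mono, dot, Real.exp_sum, Real.rpow_def_of_pos (hx _)]

theorem mono_pos {x : Fin n → ℝ} (hx : x ∈ posOrth n) (μ : Fin n → ℝ) : 0 < mono x μ :=
  Finset.prod_pos fun i _ ↦ Real.rpow_pos_of_pos (hx i) _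

variable {α : Type*} {l : Filter α} {x : α → Fin n → ℝ} {s : α → ℝ} {w μ ν : Fin n → ℝ}

theorem tendsto_dot_sub_dot_atTop {y : α → Fin n → ℝ} (hs : Tendsto s l atTop)
    (hw : Tendsto (fun m i ↦ y m i / s m) l (𝓝 w)) (h : dot w ν < dot w μ) :
    Tendsto (fun m ↦ dot (y m) μ - dot (y m) ν) l atTop := by
  have hcont : Continuous fun v : Fin n → ℝ ↦ v ⬝ᵥ (μ - ν) := by fun_prop
  have hpos : 0 < w ⬝ᵥ (μ - ν) := by
    rwa [dotProduct_sub, sub_pos, ← dot_eq_dotProduct, ← dot_eq_dotProduct]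
  refine (hs.atTop_mul_pos hpos ((hcont.tendsto w).comp hw)).congr' ?_
  filter_upwards [hs.eventually_ne_atTop 0] with m hm
  have hscale : s m • (fun i ↦ y m i / s m) = y m := by
    ext i
    exact mul_div_cancel₀ (y m i) hm
  calc s m * ((fun i ↦ y m i / s m) ⬝ᵥ (μ - ν))
    _ = (s m • fun i ↦ y m i / s m) ⬝ᵥ (μ - ν) := by rw [smul_dotProduct, smul_eq_mul]
    _ = dot (y m) μ - dot (y m) ν := by
      rw [hscale, dotProduct_sub, dot_eq_dotProduct, dot_eq_dotProduct]

theorem isLittleO_mono_mono (hx : ∀ᶠ m in l, x m ∈ posOrth n) (hs : Tendsto s l atTop)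
    (hw : Tendsto (fun m i ↦ Real.log (x m i) / s m) l (𝓝 w)) (h : dot w ν < dot w μ) :
    (fun m ↦ mono (x m) ν) =o[l] fun m ↦ mono (x m) μ := by
  have hexp := Real.isLittleO_exp_comp_exp_comp.mpr (tendsto_dot_sub_dot_atTop hs hw h)
  refine hexp.congr' ?_ ?_ <;>
    filter_upwards [hx] with m hm using (mono_eq_exp hm _).symm

end Monomials

section Faces

variable {f : Signomial n} {w μ ν : Fin n → ℝ}

theorem exists_mem_supp_mem_faceAt (hf : f.supp.Nonempty) (w : Fin n → ℝ) :
    ∃ μ ∈ f.supp, μ ∈ f.faceAt w := by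
  obtain ⟨μ, hμ, hmax⟩ := f.supp.exists_max_image (dot w) hf
  refine ⟨μ, hμ, subset_convexHull ℝ _ hμ, fun ν hν ↦ ?_⟩
  have hconv : ConvexOn ℝ Set.univ (dot w) := (dotProductBilin ℝ ℝ w).convexOn convex_univ
  obtain ⟨ρ, hρ, hle⟩ := hconv.exists_ge_of_mem_convexHull (Set.subset_univ _) hν
  exact hle.trans (hmax ρ hρ)

theorem dot_lt_dot_of_notMem_faceAt (hμ : μ ∈ f.faceAt w) (hν : ν ∈ f.newton)
    (hνw : ν ∉ f.faceAt w) : dot w ν < dot w μ := by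
  by_contra! hle
  exact hνw ⟨hν, fun ρ hρ ↦ (hμ.2 ρ hρ).trans hle⟩

theorem isLittleO_eval_sub_evalOn_faceAt {α : Type*} {l : Filter α} {x : α → Fin n → ℝ}
    {s : α → ℝ} (hx : ∀ᶠ m in l, x m ∈ posOrth n) (hs : Tendsto s l atTop)
    (hw : Tendsto (fun m i ↦ Real.log (x m i) / s m) l (𝓝 w)) (hμ : μ ∈ f.faceAt w) :
    (fun m ↦ f.eval (x m) - f.evalOn (f.faceAt w) (x m)) =o[l] fun m ↦ mono (x m) μ := by
  simp only [eval, evalOn, ← Finset.sum_sub_distrib]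
  refine IsLittleO.fun_sum fun ν hν ↦ ?_
  by_cases hνw : ν ∈ f.faceAt w
  · simp only [if_pos hνw, sub_self, isLittleO_zero]
  · have hlt := dot_lt_dot_of_notMem_faceAt hμ (subset_convexHull ℝ _ hν) hνw
    simpa only [if_neg hνw, sub_zero] using
      (isLittleO_mono_mono hx hs hw hlt).const_mul_left (f.coeff ν)

end Faces

section NonnegCone

theorem evalVec_sub (A : Finset (Fin n → ℝ)) (c d : A → ℝ) (x : Fin n → ℝ) :
    evalVec A (c - d) x = evalVec A c x - evalVec A d x := by
  simp only [evalVec, Pi.sub_apply, sub_mul, Finset.sum_sub_distrib]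

theorem evalVec_smul_single (A : Finset (Fin n → ℝ)) (μ : A) (ε : ℝ) (x : Fin n → ℝ) :
    evalVec A (ε • Pi.single μ 1) x = ε * mono x μ := by
  simp [evalVec, Pi.single_apply]

theorem exists_pos_mul_mono_le_evalVec {A : Finset (Fin n → ℝ)} {c : A → ℝ}
    (hc : c ∈ interior (nonnegConeSet A)) (μ : A) :
    ∃ ε > (0 : ℝ), ∀ x ∈ posOrth n, ε * mono x μ ≤ evalVec A c x := by
  obtain ⟨ε, hε, hmem⟩ := exists_pos_sub_smul_mem_of_mem_interior hc (Pi.single μ 1)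
  refine ⟨ε, hε, fun x hx ↦ ?_⟩
  have hnonneg := hmem x hx
  rwa [evalVec_sub, evalVec_smul_single, sub_nonneg] at hnonneg

theorem evalVec_coeffVec_restSupp (f : Signomial n) (F : Set (Fin n → ℝ)) (x : Fin n → ℝ) :
    evalVec (f.restSupp F) (coeffVec f _) x = f.evalOn F x := by
  simp only [evalVec, coeffVec, evalOn, ← Finset.sum_filter]
  exact Finset.sum_coe_sort (f.restSupp F) fun μ ↦ f.coeff μ * mono x μ

end NonnegCone

section Tropicalization

theorem eventually_eval_pos {f : Signomial n} {α : Type*} {l : Filter α} {x : α → Fin n → ℝ}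
    {s : α → ℝ} {w : Fin n → ℝ} (hf : f.supp.Nonempty)
    (hint : coeffVec f (f.restSupp (f.faceAt w)) ∈
      interior (nonnegConeSet (f.restSupp (f.faceAt w))))
    (hx : ∀ᶠ m in l, x m ∈ posOrth n) (hs : Tendsto s l atTop)
    (hw : Tendsto (fun m i ↦ Real.log (x m i) / s m) l (𝓝 w)) :
    ∀ᶠ m in l, 0 < f.eval (x m) := by
  obtain ⟨μ, hμf, hμw⟩ := exists_mem_supp_mem_faceAt hf w
  have hμ : μ ∈ f.restSupp (f.faceAt w) := by
    simpa only [restSupp, Finset.mem_filter] using And.intro hμf hμw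
  obtain ⟨ε, hε, hface⟩ := exists_pos_mul_mono_le_evalVec hint ⟨μ, hμ⟩
  have hrest := (isLittleO_eval_sub_evalOn_faceAt hx hs hw hμw).def (half_pos hε)
  filter_upwards [hx, hrest] with m hxm hrestm
  have hpos : 0 < mono (x m) μ := mono_pos hxm μ
  have hfacem : ε * mono (x m) μ ≤ f.evalOn (f.faceAt w) (x m) := by
    simpa only [evalVec_coeffVec_restSupp] using hface (x m) hxm
  rw [Real.norm_eq_abs, Real.norm_of_nonneg hpos.le] at hrestm
  have hlower := neg_le_of_abs_le hrestm
  have hgap : 0 < ε / 2 * mono (x m) μ := by positivity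
  linarith

theorem NBcond.trop_negSet₁_subset {f : Signomial n} (hNB : NBcond f) :
    trop (negSet₁ f) ⊆ actualNegCone₁ f := by
  rintro w ⟨x, t, hx, -, ht, hw⟩
  by_contra hw_notMem
  have hface_nonneg : ∀ y ∈ posOrth n, 0 ≤ f.evalOn (f.faceAt w) y := by
    intro y hy
    by_contra! hlt
    exact hw_notMem ⟨y, hy, hlt⟩
  have hf : f.supp.Nonempty := Finset.nonempty_of_sum_ne_zero (hx 0).2.ne
  have hF : f.IsFace (f.faceAt w) :=
    ⟨(exists_mem_supp_mem_faceAt hf w).imp fun _ h ↦ h.2, w, rfl⟩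
  have hint := hNB _ hF fun y hy ↦ (hface_nonneg y hy).trans_eq
    (evalVec_coeffVec_restSupp f _ y).symm
  obtain ⟨m, hm⟩ := (eventually_eval_pos hf hint (.of_forall fun m ↦ (hx m).1)
    (Real.tendsto_log_atTop.comp ht) hw).exists
  exact hm.not_gt (hx m).2

theorem trop_mono {S T : Set (Fin n → ℝ)} (hST : S ⊆ T) : trop S ⊆ trop T :=
  fun _ ⟨x, t, hx, ht⟩ ↦ ⟨x, t, fun m ↦ hST (hx m), ht⟩

theorem negSet_subset_negSet₁ {k : ℕ} (f : Fin k → Signomial n) (i : Fin k) :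
    negSet f ⊆ negSet₁ (f i) :=
  fun _ hx ↦ ⟨hx.1, hx.2 i⟩

end Tropicalization

end Signomial

open Signomial in
/-- If each `fᵢ` satisfies the non-boundary condition (NB) for all faces of
its Newton polytope, then `Trop(S(f₁, …, f_k)) ⊆ ⋂ᵢ Σ(fᵢ)`. -/
theorem trop_subset_actualNegCones {n k : ℕ} (f : Fin k → Signomial n)
    (hNB : ∀ i, NBcond (f i)) :
    trop (negSet f) ⊆ ⋂ i, actualNegCone₁ (f i) := by
  refine Set.subset_iInter fun i ↦ ?_
  calc trop (negSet f) ⊆ trop (negSet₁ (f i)) := trop_mono (negSet_subset_negSet₁ f i)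
    _ ⊆ actualNegCone₁ (f i) := (hNB i).trop_negSet₁_subset
end
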